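/- arXiv:2412.07139 — 2 statements merged into one kernel-verified Lean document; each statement's English description precedes it below -/
import Mathlib

section
/- Let n ≥ 2, let φ be a Young function, and let ξ : ℝ → ℝ be continuous with ξ(0) = 0. Assume that for every δ > 0 there exists λ_δ ≥ 0 such that |ξ(β)| ≤ λ_δ φ(δ|β|) for all β ∈ ℝ. Then for every h ∈ L^φ(ℝⁿ, |x|dx) the function x ↦ ξ(h(x)) x is integrable, and the operator Ψ : L^φ(ℝⁿ, |x|dx) → ℝⁿ defined by Ψ(h) = m(ξ∘h) = ∫_{ℝⁿ} ξ(h(x)) x dx is a continuous, SL(n) covariant valuation: it satisfies Ψ(h₁ ∨ h₂) + Ψ(h₁ ∧ h₂) = Ψ(h₁) + Ψ(h₂) for all h₁, h₂, Ψ(h∘ϑ⁻¹) = ϑ Ψ(h) for all h and all real n×n matrices ϑ with determinant 1, and Ψ(h_k) → Ψ(h) whenever ‖h_k − h‖_φ → 0. -/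
open MeasureTheory Filter Set Topology TopologicalSpace
open scoped ENNReal

noncomputable section

/-- `ℝⁿ` with the Euclidean norm. -/
abbrev En (n : ℕ) := EuclideanSpace ℝ (Fin n)

/-- `φ : ℝ → ℝ` is a Young function (viewed as a function on `[0,∞)`):
`φ t = ∫₀ᵗ ψ(s) ds` for a non-decreasing, right-continuous `ψ` with `ψ 0 = 0`,
`ψ s > 0` for `s > 0` and `ψ s → ∞` as `s → ∞`. -/
def IsYoung (φ : ℝ → ℝ) : Prop :=
  ∃ ψ : ℝ → ℝ, (∀ s : ℝ, 0 ≤ s → 0 ≤ ψ s) ∧ MonotoneOn ψ (Set.Ici 0) ∧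
    (∀ s : ℝ, 0 ≤ s → ContinuousWithinAt ψ (Set.Ici s) s) ∧
    ψ 0 = 0 ∧ (∀ s : ℝ, 0 < s → 0 < ψ s) ∧
    Tendsto ψ atTop atTop ∧
    (∀ t : ℝ, 0 ≤ t → φ t = ∫ s in (0:ℝ)..t, ψ s)

/-- The complementary Young function `φ*(t) = sup_{s ≥ 0} (s t − φ s)`. -/
def conjYoung (φ : ℝ → ℝ) (t : ℝ) : ℝ :=
  sSup {y : ℝ | ∃ s : ℝ, 0 ≤ s ∧ y = s * t - φ s}

/-- The measure `μₙ(M) = ∫_M |x| dx`. -/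
def mun {n : ℕ} (M : Set (En n)) : ℝ≥0∞ :=
  ∫⁻ x in M, ENNReal.ofReal ‖x‖

/-- Membership in the Orlicz space `L^φ(ℝⁿ, |x|dx)`:
`h` is measurable and `∫ φ(δ|h(x)|)|x| dx < ∞` for every `δ > 0`. -/
def MemOrlicz {n : ℕ} (φ : ℝ → ℝ) (h : En n → ℝ) : Prop :=
  Measurable h ∧ ∀ δ : ℝ, 0 < δ →
    ∫⁻ x : En n, ENNReal.ofReal (φ (δ * |h x|)) * ENNReal.ofReal ‖x‖ < ⊤

/-- The Orlicz norm
`‖h‖_φ = sup { ∫ |h g| |x| dx : g measurable, ∫ φ*(|g|)|x| dx ≤ 1 }` (valued in `[0,∞]`). -/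
def orliczNorm {n : ℕ} (φ : ℝ → ℝ) (h : En n → ℝ) : ℝ≥0∞ :=
  ⨆ g ∈ {g : En n → ℝ | Measurable g ∧
      ∫⁻ x : En n, ENNReal.ofReal (conjYoung φ |g x|) * ENNReal.ofReal ‖x‖ ≤ 1},
    ∫⁻ x : En n, ENNReal.ofReal |h x * g x| * ENNReal.ofReal ‖x‖

/-- The moment vector `m(Q) = ∫_Q x dx` of a set `Q ⊆ ℝⁿ`. -/
def momentSet {n : ℕ} (Q : Set (En n)) : En n := ∫ x in Q, x

/-- The action of an `n × n` matrix on `ℝⁿ`. -/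
def matVec {n : ℕ} (ϑ : Matrix (Fin n) (Fin n) ℝ) (x : En n) : En n :=
  Matrix.toEuclideanLin ϑ x

/-- A compact convex polytope: the convex hull of a nonempty finite set. -/
def IsPolytope {n : ℕ} (Q : Set (En n)) : Prop :=
  ∃ S : Finset (En n), S.Nonempty ∧ Q = convexHull ℝ (S : Set (En n))

/-- The space of polytopes, topologized via the Hausdorff metric on nonempty
compact subsets of `ℝⁿ`. -/
abbrev PolySp (n : ℕ) := {K : NonemptyCompacts (En n) // IsPolytope (K : Set (En n))}

/-- `Y` is a valuation on polytopes. -/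
def IsPolyValuation {n : ℕ} (Y : Set (En n) → En n) : Prop :=
  ∀ Q₁ Q₂ : Set (En n), IsPolytope Q₁ → IsPolytope Q₂ → IsPolytope (Q₁ ∪ Q₂) →
    IsPolytope (Q₁ ∩ Q₂) → Y Q₁ + Y Q₂ = Y (Q₁ ∪ Q₂) + Y (Q₁ ∩ Q₂)

/-- `Y` is `SL(n)` covariant on polytopes: `Y(ϑ Q) = ϑ (Y Q)` for `det ϑ = 1`. -/
def IsPolySLCovariant {n : ℕ} (Y : Set (En n) → En n) : Prop :=
  ∀ Q : Set (En n), IsPolytope Q → ∀ ϑ : Matrix (Fin n) (Fin n) ℝ, ϑ.det = 1 →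
    Y (matVec ϑ '' Q) = matVec ϑ (Y Q)

/-- `Ψ` is a valuation on `L^φ(ℝⁿ, |x|dx)`. -/
def IsOrliczValuation {n : ℕ} (φ : ℝ → ℝ) (Ψ : (En n → ℝ) → En n) : Prop :=
  ∀ h₁ h₂ : En n → ℝ, MemOrlicz φ h₁ → MemOrlicz φ h₂ →
    Ψ (fun x => max (h₁ x) (h₂ x)) + Ψ (fun x => min (h₁ x) (h₂ x)) = Ψ h₁ + Ψ h₂

/-- `Ψ` is `SL(n)` covariant: `Ψ(h ∘ ϑ⁻¹) = ϑ (Ψ h)` for `det ϑ = 1`. -/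
def IsOrliczSLCovariant {n : ℕ} (φ : ℝ → ℝ) (Ψ : (En n → ℝ) → En n) : Prop :=
  ∀ h : En n → ℝ, MemOrlicz φ h → ∀ ϑ : Matrix (Fin n) (Fin n) ℝ, ϑ.det = 1 →
    Ψ (fun x => h (matVec ϑ⁻¹ x)) = matVec ϑ (Ψ h)

/-- `Ψ` is continuous: `Ψ(h_k) → Ψ(h)` whenever `‖h_k − h‖_φ → 0`. -/
def OrliczContinuous {n : ℕ} (φ : ℝ → ℝ) (Ψ : (En n → ℝ) → En n) : Prop :=
  ∀ (hk : ℕ → En n → ℝ) (h : En n → ℝ), (∀ k, MemOrlicz φ (hk k)) → MemOrlicz φ h →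
    Tendsto (fun k => orliczNorm φ (fun x => hk k x - h x)) atTop (𝓝 0) →
    Tendsto (fun k => Ψ (hk k)) atTop (𝓝 (Ψ h))

/-- `Ψ` identifies functions that agree almost everywhere. -/
def RespectsAE {n : ℕ} (φ : ℝ → ℝ) (Ψ : (En n → ℝ) → En n) : Prop :=
  ∀ h₁ h₂ : En n → ℝ, MemOrlicz φ h₁ → MemOrlicz φ h₂ →
    (∀ᵐ x : En n, h₁ x = h₂ x) → Ψ h₁ = Ψ h₂

/-- The `Δ₂` condition: `φ(2t) ≤ C φ(t)` for all `t ≥ T`. -/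
def SatisfiesDelta2 (φ : ℝ → ℝ) : Prop :=
  ∃ T C : ℝ, 0 ≤ T ∧ 0 < C ∧ ∀ t : ℝ, T ≤ t → φ (2 * t) ≤ C * φ t

/-- A closed cube in `ℝⁿ`: `{x : cᵢ ≤ xᵢ ≤ dᵢ}` with all side lengths equal. -/
def IsClosedCube {n : ℕ} (C : Set (En n)) : Prop :=
  ∃ c d : Fin n → ℝ, (∃ L : ℝ, 0 ≤ L ∧ ∀ i, d i - c i = L) ∧
    C = {x : En n | ∀ i, c i ≤ x i ∧ x i ≤ d i}

/-!
With `dν = |x|dx`, integrability of `ξ(h(x)) x` is integrability of `ξ ∘ h` with respect to `ν`,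
which follows from the domination `|ξ(β)| ≤ C φ(δ|β|)`. The valuation property holds because
`{h₁ ∨ h₂, h₁ ∧ h₂}` and `{h₁, h₂}` agree pointwise, and covariance is a linear change of variables.

Continuity compares the Orlicz norm with the modular `∫ φ(|u|) dν`. Testing the norm against
multiples of `ψ(|u|)`, where `ψ` is the density of `φ` and equality holds in Young's inequality,
shows that `‖u‖_φ ≤ 1` implies `∫ φ(|u|) dν ≤ 1`; by convexity, norm convergence then forces
`∫ φ(c|h_k - h|) dν → 0` for every `c > 0`. Hence a subsequence converges almost everywhere, while
`|ξ(h_k)| ≤ C φ(2δ|h|) + C φ(2δ|h_k - h|)` is a fixed integrable function plus a term tending to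
zero in `L¹(ν)`, so dominated convergence applies to `ξ ∘ h_k`.
-/

section Preliminaries

theorem mul_sub_le_integral_of_monotoneOn {f : ℝ → ℝ} {a b : ℝ} (hf : MonotoneOn f (uIcc a b)) :
    f a * (b - a) ≤ ∫ x in a..b, f x := by
  have hf_int := hf.intervalIntegrable (μ := volume)
  rcases le_total a b with hab | hba
  · have := intervalIntegral.integral_mono_on hab intervalIntegrable_const hf_int
      fun x hx => hf left_mem_uIcc (Icc_subset_uIcc hx) hx.1
    simpa [mul_comm] using this
  · have := intervalIntegral.integral_mono_on hba hf_int.symm intervalIntegrable_const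
      fun x hx => hf (Icc_subset_uIcc' hx) left_mem_uIcc hx.2
    rw [intervalIntegral.integral_symm b a]
    simp only [intervalIntegral.integral_const, smul_eq_mul] at this
    linarith

theorem measurable_comp_abs_of_monotoneOn {α : Type*} [MeasurableSpace α] {f : ℝ → ℝ}
    (hf : MonotoneOn f (Ici 0)) {u : α → ℝ} (hu : Measurable u) :
    Measurable fun x => f |u x| := by
  have hmono : Monotone fun t => f (max t 0) := fun a b hab =>
    hf (le_max_right a 0) (le_max_right b 0) (max_le_max_right 0 hab)
  simpa [Function.comp_def] using hmono.measurable.comp hu.abs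

theorem tendsto_lintegral_zero_of_le_add {α ι : Type*} [MeasurableSpace α] {μ : Measure α}
    {l : Filter ι} [l.IsCountablyGenerated] {f r : ι → α → ℝ≥0∞} {g : α → ℝ≥0∞}
    (hf : ∀ i, Measurable (f i)) (hg : Measurable g) (hg_fin : ∫⁻ x, g x ∂μ ≠ ⊤)
    (hle : ∀ i x, f i x ≤ g x + r i x) (hr : Tendsto (fun i => ∫⁻ x, r i x ∂μ) l (𝓝 0))
    (hlim : ∀ᵐ x ∂μ, Tendsto (fun i => f i x) l (𝓝 0)) :
    Tendsto (fun i => ∫⁻ x, f i x ∂μ) l (𝓝 0) := by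
  have hmin : Tendsto (fun i => ∫⁻ x, min (f i x) (g x) ∂μ) l (𝓝 0) := by
    have := tendsto_lintegral_filter_of_dominated_convergence (f := 0) g
      (Eventually.of_forall fun i => (hf i).min hg)
      (Eventually.of_forall fun i => ae_of_all μ fun x => min_le_right _ _) hg_fin
      (hlim.mono fun x hx => tendsto_of_tendsto_of_tendsto_of_le_of_le tendsto_const_nhds hx
        (fun _ => zero_le) fun _ => min_le_left _ _)
    simpa using this
  refine tendsto_of_tendsto_of_tendsto_of_le_of_le tendsto_const_nhds
    (by simpa using hmin.add hr) (fun _ => zero_le) fun i => ?_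
  rw [← lintegral_add_left ((hf i).min hg)]
  refine lintegral_mono fun x => ?_
  rcases le_total (f i x) (g x) with h | h
  · simp [min_eq_left h]
  · simpa [min_eq_right h] using hle i x

end Preliminaries

section Young

variable {φ ψ : ℝ → ℝ}

/-- `ψ` is a monotone selection of subgradients of `φ` on `[0,∞)` that is positive on `(0,∞)` and
vanishes at `0`. The density of a Young function is one; the subgradient inequality `add_mul_sub_le`
replaces its integral representation. -/
structure IsSubgradientSelection (φ ψ : ℝ → ℝ) : Prop where
  map_zero : ψ 0 = 0
  pos : ∀ s, 0 < s → 0 < ψ s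
  monotoneOn : MonotoneOn ψ (Ici 0)
  add_mul_sub_le : ∀ s t, 0 ≤ s → 0 ≤ t → φ s + ψ s * (t - s) ≤ φ t

theorem IsSubgradientSelection.nonneg (hψ : IsSubgradientSelection φ ψ) {s : ℝ} (hs : 0 ≤ s) :
    0 ≤ ψ s :=
  hψ.map_zero ▸ hψ.monotoneOn self_mem_Ici hs hs

namespace IsYoung

variable (hφ : IsYoung φ)
include hφ

theorem map_zero : φ 0 = 0 := by
  obtain ⟨ψ, -, -, -, -, -, -, hint⟩ := hφ
  simp [hint 0 le_rfl]

theorem exists_isSubgradientSelection : ∃ ψ, IsSubgradientSelection φ ψ := by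
  obtain ⟨ψ, -, hmono, -, hzero, hpos, -, hint⟩ := hφ
  have hmono' {a b : ℝ} (ha : 0 ≤ a) (hb : 0 ≤ b) : MonotoneOn ψ (uIcc a b) :=
    hmono.mono fun x hx => (le_min ha hb).trans hx.1
  refine ⟨ψ, hzero, hpos, hmono, fun s t hs ht => ?_⟩
  rw [hint s hs, hint t ht, ← intervalIntegral.integral_add_adjacent_intervals
    (hmono' le_rfl hs).intervalIntegrable (hmono' hs ht).intervalIntegrable]
  gcongr
  exact mul_sub_le_integral_of_monotoneOn (hmono' hs ht)

theorem monotoneOn : MonotoneOn φ (Ici 0) := fun s hs t ht hst => by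
  obtain ⟨ψ, hψ⟩ := hφ.exists_isSubgradientSelection
  have := mul_nonneg (hψ.nonneg hs) (sub_nonneg.2 hst)
  linarith [hψ.add_mul_sub_le s t hs ht]

theorem nonneg {s : ℝ} (hs : 0 ≤ s) : 0 ≤ φ s :=
  hφ.map_zero ▸ hφ.monotoneOn self_mem_Ici hs hs

theorem pos {s : ℝ} (hs : 0 < s) : 0 < φ s := by
  obtain ⟨ψ, hψ⟩ := hφ.exists_isSubgradientSelection
  have hs2 := half_pos hs
  have := mul_pos (hψ.pos _ hs2) (sub_pos.2 (half_lt_self hs))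
  linarith [hψ.add_mul_sub_le (s / 2) s hs2.le hs.le, hφ.nonneg hs2.le]

theorem map_mul_le {c s : ℝ} (hc : 0 ≤ c) (hc' : c ≤ 1) (hs : 0 ≤ s) : φ (c * s) ≤ c * φ s := by
  obtain ⟨ψ, hψ⟩ := hφ.exists_isSubgradientSelection
  have hcs := mul_nonneg hc hs
  have at_s := mul_le_mul_of_nonneg_left (hψ.add_mul_sub_le (c * s) s hcs hs) hc
  have at_zero :=
    mul_le_mul_of_nonneg_left (hψ.add_mul_sub_le (c * s) 0 hcs le_rfl) (sub_nonneg.2 hc')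
  rw [hφ.map_zero] at at_zero
  linarith

theorem map_abs_add_le (a b : ℝ) : φ |a + b| ≤ φ |2 * a| + φ |2 * b| := by
  have ha := hφ.nonneg (abs_nonneg (2 * a))
  have hb := hφ.nonneg (abs_nonneg (2 * b))
  have hab := abs_add_le a b
  simp only [abs_mul, abs_two] at ha hb ⊢
  rcases le_total |a| |b| with h | h
  · have := hφ.monotoneOn (abs_nonneg (a + b)) (mul_nonneg zero_le_two (abs_nonneg b)) (by linarith)
    linarith
  · have := hφ.monotoneOn (abs_nonneg (a + b)) (mul_nonneg zero_le_two (abs_nonneg a)) (by linarith)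
    linarith

end IsYoung

theorem IsSubgradientSelection.mul_le_map_two_mul (hψ : IsSubgradientSelection φ ψ)
    (hφ : IsYoung φ) {s : ℝ} (hs : 0 ≤ s) : s * ψ s ≤ φ (2 * s) := by
  linarith [hψ.add_mul_sub_le s (2 * s) hs (by positivity), hφ.nonneg hs]

theorem IsSubgradientSelection.map_le_mul (hψ : IsSubgradientSelection φ ψ) (hφ : IsYoung φ)
    {s : ℝ} (hs : 0 ≤ s) : φ s ≤ s * ψ s := by
  linarith [hψ.add_mul_sub_le s 0 hs le_rfl, hφ.map_zero]

theorem conjYoung_mul_le {s p c : ℝ} (hφ : ∀ t, 0 ≤ t → 0 ≤ φ t)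
    (hp : ∀ t, 0 ≤ t → φ s + p * (t - s) ≤ φ t) (hc : 0 ≤ c) (hc' : c ≤ 1) :
    conjYoung φ (c * p) ≤ c * (s * p - φ s) := by
  refine csSup_le ⟨_, 0, le_rfl, rfl⟩ ?_
  rintro _ ⟨t, ht, rfl⟩
  have hsub := mul_le_mul_of_nonneg_left (hp t ht) hc
  have hpos := mul_nonneg (sub_nonneg.2 hc') (hφ t ht)
  linarith

end Young

section Orlicz

variable {α : Type*} [MeasurableSpace α] {μ : Measure α} {φ ψ ξ : ℝ → ℝ} {u v : α → ℝ}

/-- The Orlicz modular `∫ φ(|u|) dμ`. -/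
def orliczModular (μ : Measure α) (φ : ℝ → ℝ) (u : α → ℝ) : ℝ≥0∞ :=
  ∫⁻ x, ENNReal.ofReal (φ |u x|) ∂μ

/-- Membership in the Orlicz heart of `φ` over `μ`: every positive multiple of `u` has finite
modular. For the measure `|x|dx` this is `MemOrlicz`. -/
def MemOrliczHeart (μ : Measure α) (φ : ℝ → ℝ) (u : α → ℝ) : Prop :=
  Measurable u ∧ ∀ c : ℝ, 0 < c → orliczModular μ φ (fun x => c * u x) < ⊤

/-- The Orlicz norm, by duality with `conjYoung φ`, over an arbitrary measure `μ`. For the measure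
`|x|dx` this is `orliczNorm`. -/
def orliczNormOf (μ : Measure α) (φ : ℝ → ℝ) (u : α → ℝ) : ℝ≥0∞ :=
  ⨆ g ∈ {g : α → ℝ | Measurable g ∧ orliczModular μ (conjYoung φ) g ≤ 1},
    ∫⁻ x, ENNReal.ofReal |u x * g x| ∂μ

theorem IsYoung.measurable_ofReal_comp_abs (hφ : IsYoung φ) (hu : Measurable u) :
    Measurable fun x => ENNReal.ofReal (φ |u x|) :=
  (measurable_comp_abs_of_monotoneOn hφ.monotoneOn hu).ennreal_ofReal

theorem IsYoung.ofReal_map_abs_add_le (hφ : IsYoung φ) (a b : ℝ) :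
    ENNReal.ofReal (φ |a + b|) ≤ ENNReal.ofReal (φ |2 * a|) + ENNReal.ofReal (φ |2 * b|) :=
  (ENNReal.ofReal_le_ofReal (hφ.map_abs_add_le a b)).trans ENNReal.ofReal_add_le

theorem orliczModular_const_mul_le (hφ : IsYoung φ) {c : ℝ} (hc : 0 ≤ c) (hc' : c ≤ 1)
    (u : α → ℝ) :
    orliczModular μ φ (fun x => c * u x) ≤ ENNReal.ofReal c * orliczModular μ φ u := by
  rw [orliczModular, orliczModular, ← lintegral_const_mul' _ _ ENNReal.ofReal_ne_top]
  refine lintegral_mono fun x => ?_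
  rw [← ENNReal.ofReal_mul hc, abs_mul, abs_of_nonneg hc]
  exact ENNReal.ofReal_le_ofReal (hφ.map_mul_le hc hc' (abs_nonneg _))

theorem orliczNormOf_const_mul (μ : Measure α) (φ : ℝ → ℝ) (c : ℝ) (u : α → ℝ) :
    orliczNormOf μ φ (fun x => c * u x) = ENNReal.ofReal |c| * orliczNormOf μ φ u := by
  simp only [orliczNormOf, ENNReal.mul_iSup, mul_assoc, abs_mul c,
    ENNReal.ofReal_mul (abs_nonneg c), lintegral_const_mul' _ _ ENNReal.ofReal_ne_top]

theorem MemOrliczHeart.const_mul {c : ℝ} (hc : 0 < c) (hu : MemOrliczHeart μ φ u) :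
    MemOrliczHeart μ φ fun x => c * u x :=
  ⟨hu.1.const_mul c, fun d hd => by simpa only [mul_assoc] using hu.2 (d * c) (mul_pos hd hc)⟩

theorem MemOrliczHeart.sub (hφ : IsYoung φ) (hu : MemOrliczHeart μ φ u)
    (hv : MemOrliczHeart μ φ v) : MemOrliczHeart μ φ fun x => u x - v x := by
  refine ⟨hu.1.sub hv.1, fun c hc => ?_⟩
  have hfin := ENNReal.add_lt_top.2
    ⟨hu.2 (2 * c) (mul_pos two_pos hc), hv.2 (2 * c) (mul_pos two_pos hc)⟩
  rw [orliczModular, orliczModular,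
    ← lintegral_add_left (hφ.measurable_ofReal_comp_abs (hu.1.const_mul _))] at hfin
  refine (lintegral_mono fun x => ?_).trans_lt hfin
  simpa only [mul_neg, abs_neg, ← sub_eq_add_neg, ← mul_sub, ← mul_assoc]
    using hφ.ofReal_map_abs_add_le (c * u x) (-(c * v x))

theorem ofReal_mul_lintegral_mul_subgradient_le_orliczNormOf (hφ : IsYoung φ)
    (hψ : IsSubgradientSelection φ ψ) (hu : Measurable u) {c : ℝ} (hc : 0 ≤ c) (hc' : c ≤ 1)
    (hconj : ENNReal.ofReal c * ∫⁻ x, ENNReal.ofReal (|u x| * ψ |u x| - φ |u x|) ∂μ ≤ 1) :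
    ENNReal.ofReal c * ∫⁻ x, ENNReal.ofReal (|u x| * ψ |u x|) ∂μ ≤ orliczNormOf μ φ u := by
  have hψ_nonneg (x) : 0 ≤ c * ψ |u x| := mul_nonneg hc (hψ.nonneg (abs_nonneg _))
  have hmeas : Measurable fun x => c * ψ |u x| :=
    (measurable_comp_abs_of_monotoneOn hψ.monotoneOn hu).const_mul c
  have hmod : orliczModular μ (conjYoung φ) (fun x => c * ψ |u x|) ≤ 1 := by
    refine le_trans ?_ hconj
    rw [orliczModular, ← lintegral_const_mul' _ _ ENNReal.ofReal_ne_top]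
    refine lintegral_mono fun x => ?_
    rw [← ENNReal.ofReal_mul hc, abs_of_nonneg (hψ_nonneg x)]
    exact ENNReal.ofReal_le_ofReal <| conjYoung_mul_le (fun _ => hφ.nonneg)
      (fun t ht => hψ.add_mul_sub_le _ t (abs_nonneg _) ht) hc hc'
  calc ENNReal.ofReal c * ∫⁻ x, ENNReal.ofReal (|u x| * ψ |u x|) ∂μ
      = ∫⁻ x, ENNReal.ofReal |u x * (c * ψ |u x|)| ∂μ := by
        rw [← lintegral_const_mul' _ _ ENNReal.ofReal_ne_top]
        refine lintegral_congr fun x => ?_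
        rw [← ENNReal.ofReal_mul hc, abs_mul (u x), abs_of_nonneg (hψ_nonneg x), mul_left_comm]
    _ ≤ orliczNormOf μ φ u := le_iSup₂_of_le _ ⟨hmeas, hmod⟩ le_rfl

theorem orliczModular_le_one_of_orliczNormOf_le_one (hφ : IsYoung φ) (hu : MemOrliczHeart μ φ u)
    (hnorm : orliczNormOf μ φ u ≤ 1) : orliczModular μ φ u ≤ 1 := by
  obtain ⟨ψ, hψ⟩ := hφ.exists_isSubgradientSelection
  set B := ∫⁻ x, ENNReal.ofReal (|u x| * ψ |u x| - φ |u x|) ∂μ with hB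
  have hsum : ∫⁻ x, ENNReal.ofReal (|u x| * ψ |u x|) ∂μ = orliczModular μ φ u + B := by
    rw [orliczModular, hB, ← lintegral_add_left (hφ.measurable_ofReal_comp_abs hu.1)]
    refine lintegral_congr fun x => ?_
    rw [← ENNReal.ofReal_add (hφ.nonneg (abs_nonneg _))
      (sub_nonneg.2 (hψ.map_le_mul hφ (abs_nonneg _))), add_sub_cancel]
  have hB_fin : B ≠ ⊤ := by
    refine ne_top_of_le_ne_top (hu.2 2 two_pos).ne ((le_add_self.trans_eq hsum.symm).trans ?_)
    refine lintegral_mono fun x => ENNReal.ofReal_le_ofReal ?_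
    simpa [abs_mul] using hψ.mul_le_map_two_mul hφ (abs_nonneg (u x))
  have hdual {c : ℝ} (hc : 0 ≤ c) (hc' : c ≤ 1) (hcB : ENNReal.ofReal c * B ≤ 1) :
      ENNReal.ofReal c * (orliczModular μ φ u + B) ≤ 1 :=
    hsum ▸ (ofReal_mul_lintegral_mul_subgradient_le_orliczNormOf hφ hψ hu.1 hc hc' hcB).trans hnorm
  rcases le_total B 1 with hB1 | hB1
  · have := hdual zero_le_one le_rfl (by simpa using hB1)
    exact le_self_add.trans (by simpa using this)
  · have hB0 : B ≠ 0 := (one_pos.trans_le hB1).ne'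
    have hc_eq : ENNReal.ofReal B⁻¹.toReal = B⁻¹ := ENNReal.ofReal_toReal (by simpa using hB0)
    have hle := hdual (c := B⁻¹.toReal) ENNReal.toReal_nonneg
      (ENNReal.toReal_le_of_le_ofReal zero_le_one (by simpa using hB1))
      (by rw [hc_eq, ENNReal.inv_mul_cancel hB0 hB_fin])
    rw [hc_eq, mul_add, ENNReal.inv_mul_cancel hB0 hB_fin] at hle
    have hzero : B⁻¹ * orliczModular μ φ u = 0 := by
      simpa using ENNReal.le_sub_of_add_le_right ENNReal.one_ne_top hle
    rcases mul_eq_zero.1 hzero with h | h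
    · exact absurd h (ENNReal.inv_ne_zero.2 hB_fin)
    · exact h.trans_le zero_le_one

theorem orliczModular_le_of_orliczNormOf_le (hφ : IsYoung φ) (hu : MemOrliczHeart μ φ u) {r : ℝ}
    (hr : 0 < r) (hr' : r ≤ 1) (hnorm : orliczNormOf μ φ u ≤ ENNReal.ofReal r) :
    orliczModular μ φ u ≤ ENNReal.ofReal r := by
  have hr_inv := inv_pos.2 hr
  have hscaled : orliczModular μ φ (fun x => r⁻¹ * u x) ≤ 1 := by
    refine orliczModular_le_one_of_orliczNormOf_le_one hφ (hu.const_mul hr_inv) ?_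
    rw [orliczNormOf_const_mul, abs_of_pos hr_inv]
    refine (mul_le_mul_right hnorm _).trans_eq ?_
    rw [← ENNReal.ofReal_mul hr_inv.le, inv_mul_cancel₀ hr.ne', ENNReal.ofReal_one]
  calc orliczModular μ φ u = orliczModular μ φ (fun x => r * (r⁻¹ * u x)) := by
        simp only [mul_inv_cancel_left₀ hr.ne']
    _ ≤ ENNReal.ofReal r * orliczModular μ φ (fun x => r⁻¹ * u x) :=
        orliczModular_const_mul_le hφ hr.le hr' _
    _ ≤ ENNReal.ofReal r := mul_le_of_le_one_right' hscaled

variable {ι : Type*} {l : Filter ι}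

theorem tendsto_orliczModular_const_mul_of_tendsto_orliczNormOf (hφ : IsYoung φ)
    {u : ι → α → ℝ} (hu : ∀ i, MemOrliczHeart μ φ (u i))
    (hlim : Tendsto (fun i => orliczNormOf μ φ (u i)) l (𝓝 0)) {c : ℝ} (hc : 0 < c) :
    Tendsto (fun i => orliczModular μ φ (fun x => c * u i x)) l (𝓝 0) := by
  have hlim_c : Tendsto (fun i => orliczNormOf μ φ (fun x => c * u i x)) l (𝓝 0) := by
    simpa only [orliczNormOf_const_mul, mul_zero] using
      ENNReal.Tendsto.const_mul hlim (.inr ENNReal.ofReal_ne_top)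
  refine ENNReal.tendsto_nhds_zero.2 fun ε hε => ?_
  obtain ⟨r, hr, hrε⟩ := ENNReal.lt_iff_exists_nnreal_btwn.1 (lt_min hε one_pos)
  filter_upwards [ENNReal.tendsto_nhds_zero.1 hlim_c r hr] with i hi
  rw [← ENNReal.ofReal_coe_nnreal] at hi
  refine (orliczModular_le_of_orliczNormOf_le hφ ((hu i).const_mul hc) (by exact_mod_cast hr)
    (by exact_mod_cast (hrε.trans_le (min_le_right _ _)).le) hi).trans ?_
  rw [ENNReal.ofReal_coe_nnreal]
  exact (hrε.trans_le (min_le_left _ _)).le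

theorem tendstoInMeasure_of_tendsto_orliczModular (hφ : IsYoung φ) {f : ι → α → ℝ} {g : α → ℝ}
    (hf : ∀ i, Measurable (f i)) (hg : Measurable g)
    (hlim : Tendsto (fun i => orliczModular μ φ (fun x => f i x - g x)) l (𝓝 0)) :
    TendstoInMeasure μ f l g := by
  rw [tendstoInMeasure_iff_norm]
  intro ε hε
  have hφε : ENNReal.ofReal (φ ε) ≠ 0 := (ENNReal.ofReal_pos.2 (hφ.pos hε)).ne'
  have hdiv : Tendsto (fun i => orliczModular μ φ (fun x => f i x - g x) / ENNReal.ofReal (φ ε))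
      l (𝓝 0) := by
    simpa using ENNReal.Tendsto.div_const hlim (.inr hφε)
  refine tendsto_of_tendsto_of_tendsto_of_le_of_le tendsto_const_nhds hdiv
    (fun _ => zero_le) fun i => (measure_mono fun x hx => ?_).trans
      (meas_ge_le_lintegral_div
        (hφ.measurable_ofReal_comp_abs ((hf i).sub hg)).aemeasurable hφε ENNReal.ofReal_ne_top)
  exact ENNReal.ofReal_le_ofReal (hφ.monotoneOn hε.le (abs_nonneg (f i x - g x)) hx)

theorem IsYoung.enorm_le_of_dominated (hφ : IsYoung φ) {δ C : ℝ}
    (hdom : ∀ β, |ξ β| ≤ C * φ (δ * |β|)) (hδ : 0 < δ) (β : ℝ) :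
    ‖ξ β‖ₑ ≤ ENNReal.ofReal C * ENNReal.ofReal (φ |δ * β|) := by
  rw [abs_mul, abs_of_pos hδ, ← ENNReal.ofReal_mul' (hφ.nonneg (by positivity)),
    Real.enorm_eq_ofReal_abs]
  exact ENNReal.ofReal_le_ofReal (hdom β)

theorem MemOrliczHeart.integrable_comp (hφ : IsYoung φ) (hξ : Measurable ξ) {δ C : ℝ}
    (hδ : 0 < δ) (hdom : ∀ β, |ξ β| ≤ C * φ (δ * |β|)) (hu : MemOrliczHeart μ φ u) :
    Integrable (fun x => ξ (u x)) μ := by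
  refine ⟨(hξ.comp hu.1).aestronglyMeasurable, ?_⟩
  refine (lintegral_mono fun x => hφ.enorm_le_of_dominated hdom hδ (u x)).trans_lt ?_
  rw [lintegral_const_mul' _ _ ENNReal.ofReal_ne_top]
  exact ENNReal.mul_lt_top ENNReal.ofReal_lt_top (hu.2 δ hδ)

theorem tendsto_lintegral_enorm_comp_sub_comp [l.IsCountablyGenerated] (hφ : IsYoung φ)
    (hξ : Continuous ξ) {δ C : ℝ} (hδ : 0 < δ) (hdom : ∀ β, |ξ β| ≤ C * φ (δ * |β|))
    {f : ι → α → ℝ} {g : α → ℝ} (hf : ∀ i, Measurable (f i)) (hg : MemOrliczHeart μ φ g)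
    (hlim : ∀ c : ℝ, 0 < c →
      Tendsto (fun i => orliczModular μ φ (fun x => c * (f i x - g x))) l (𝓝 0)) :
    Tendsto (fun i => ∫⁻ x, ‖ξ (f i x) - ξ (g x)‖ₑ ∂μ) l (𝓝 0) := by
  have h2δ : 0 < 2 * δ := mul_pos two_pos hδ
  set F : α → ℝ≥0∞ := fun x =>
    ENNReal.ofReal C * ENNReal.ofReal (φ |2 * δ * g x|) + ‖ξ (g x)‖ₑ with hF
  set r : ι → α → ℝ≥0∞ := fun i x =>
    ENNReal.ofReal C * ENNReal.ofReal (φ |2 * δ * (f i x - g x)|)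
  have hφ_meas : Measurable fun x => ENNReal.ofReal C * ENNReal.ofReal (φ |2 * δ * g x|) :=
    (hφ.measurable_ofReal_comp_abs (hg.1.const_mul _)).const_mul _
  have hF_fin : ∫⁻ x, F x ∂μ ≠ ⊤ := by
    rw [hF, lintegral_add_left hφ_meas, lintegral_const_mul' _ _ ENNReal.ofReal_ne_top]
    exact ENNReal.add_ne_top.2 ⟨ENNReal.mul_ne_top ENNReal.ofReal_ne_top (hg.2 _ h2δ).ne,
      (hg.integrable_comp hφ hξ.measurable hδ hdom).2.ne⟩
  have hle (i x) : ‖ξ (f i x) - ξ (g x)‖ₑ ≤ F x + r i x := by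
    have hsplit := hφ.ofReal_map_abs_add_le (δ * g x) (δ * (f i x - g x))
    rw [← mul_add, add_sub_cancel, ← mul_assoc, ← mul_assoc] at hsplit
    calc ‖ξ (f i x) - ξ (g x)‖ₑ ≤ ‖ξ (f i x)‖ₑ + ‖ξ (g x)‖ₑ := enorm_sub_le
      _ ≤ ENNReal.ofReal C * (ENNReal.ofReal (φ |2 * δ * g x|) +
            ENNReal.ofReal (φ |2 * δ * (f i x - g x)|)) + ‖ξ (g x)‖ₑ := by
          gcongr
          exact (hφ.enorm_le_of_dominated hdom hδ _).trans (by gcongr)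
      _ = F x + r i x := by rw [mul_add, add_right_comm]
  have hr : Tendsto (fun i => ∫⁻ x, r i x ∂μ) l (𝓝 0) := by
    simpa only [r, orliczModular, lintegral_const_mul' _ _ ENNReal.ofReal_ne_top, mul_zero] using
      ENNReal.Tendsto.const_mul (hlim _ h2δ) (.inr ENNReal.ofReal_ne_top)
  refine tendsto_of_subseq_tendsto fun ns hns => ?_
  have hmeasure : TendstoInMeasure μ (fun k => f (ns k)) atTop g :=
    tendstoInMeasure_of_tendsto_orliczModular hφ (fun _ => hf _) hg.1 <| by
      simpa only [one_mul, Function.comp_def] using (hlim 1 one_pos).comp hns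
  obtain ⟨ms, hms, hae⟩ := hmeasure.exists_seq_tendsto_ae
  refine ⟨ms, tendsto_lintegral_zero_of_le_add
    (fun k => ((hξ.measurable.comp (hf _)).sub (hξ.measurable.comp hg.1)).enorm)
    (hφ_meas.add (hξ.measurable.comp hg.1).enorm) hF_fin (fun k => hle _)
    (hr.comp (hns.comp hms.tendsto_atTop)) ?_⟩
  filter_upwards [hae] with x hx
  simpa using (((hξ.tendsto _).comp hx).sub_const (ξ (g x))).enorm

end Orlicz

section Moment

theorem integral_comp_max_add_integral_comp_min {α β E : Type*} [MeasurableSpace α]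
    {μ : Measure α} [LinearOrder β] [NormedAddCommGroup E] [NormedSpace ℝ E] {F : β → α → E}
    {f g : α → β} (hfg : MeasurableSet {x | f x ≤ g x}) (hf : Integrable (fun x => F (f x) x) μ)
    (hg : Integrable (fun x => F (g x) x) μ) :
    ∫ x, F (max (f x) (g x)) x ∂μ + ∫ x, F (min (f x) (g x)) x ∂μ =
      ∫ x, F (f x) x ∂μ + ∫ x, F (g x) x ∂μ := by
  classical
  have hmax : Integrable (fun x => F (max (f x) (g x)) x) μ := by
    refine (Integrable.piecewise hfg hg.integrableOn hf.integrableOn).congr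
      (ae_of_all _ fun x => ?_)
    simp only [piecewise, mem_ofPred_eq, max_def]
    split_ifs <;> rfl
  have hmin : Integrable (fun x => F (min (f x) (g x)) x) μ := by
    refine (Integrable.piecewise hfg hf.integrableOn hg.integrableOn).congr
      (ae_of_all _ fun x => ?_)
    simp only [piecewise, mem_ofPred_eq, min_def]
    split_ifs <;> rfl
  rw [← integral_add hmax hmin, ← integral_add hf hg]
  refine integral_congr_ae (ae_of_all _ fun x => ?_)
  rcases le_total (f x) (g x) with h | h
  · simp only [max_eq_right h, min_eq_left h, add_comm]
  · simp only [max_eq_left h, min_eq_right h]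

variable {E : Type*} [NormedAddCommGroup E] [MeasurableSpace E]

/-- The measure `|x| dμ(x)`. -/
def normWeighted (μ : Measure E) : Measure E :=
  μ.withDensity fun x => ENNReal.ofReal ‖x‖

theorem lintegral_normWeighted [OpensMeasurableSpace E] (μ : Measure E) (f : E → ℝ≥0∞) :
    ∫⁻ x, f x ∂normWeighted μ = ∫⁻ x, f x * ENNReal.ofReal ‖x‖ ∂μ := by
  rw [normWeighted, lintegral_withDensity_eq_lintegral_mul_non_measurable _ (by fun_prop)
    (ae_of_all _ fun _ => ENNReal.ofReal_lt_top)]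
  simp only [Pi.mul_apply, mul_comm]

theorem lintegral_enorm_smul_self [NormedSpace ℝ E] [OpensMeasurableSpace E] (μ : Measure E)
    (f : E → ℝ) :
    ∫⁻ x, ‖f x • x‖ₑ ∂μ = ∫⁻ x, ‖f x‖ₑ ∂normWeighted μ := by
  simp only [lintegral_normWeighted, enorm_smul, ofReal_norm]

theorem integral_comp_symm_smul_self [NormedSpace ℝ E] [BorelSpace E] [FiniteDimensional ℝ E]
    (μ : Measure E) [μ.IsAddHaarMeasure] (L : E ≃L[ℝ] E) (hL : LinearMap.det (L : E →ₗ[ℝ] E) = 1)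
    (f : E → ℝ) :
    ∫ x, f (L.symm x) • x ∂μ = L (∫ x, f x • x ∂μ) := by
  have hmap : μ.map L = μ := by
    simpa [hL] using Measure.map_linearMap_addHaar_eq_smul_addHaar μ (f := (L : E →ₗ[ℝ] E))
      (by simp [hL])
  calc ∫ x, f (L.symm x) • x ∂μ
      = ∫ x, f (L.symm x) • x ∂μ.map L.toHomeomorph.toMeasurableEquiv := by
        exact congrArg (fun ν => ∫ x, f (L.symm x) • x ∂ν) hmap.symm
    _ = ∫ x, L (f x • x) ∂μ := by
        rw [integral_map_equiv]
        simp
    _ = L (∫ x, f x • x ∂μ) := L.integral_comp_comm _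

end Moment

section EuclideanMoment

variable {n : ℕ} {φ ξ : ℝ → ℝ}

theorem memOrlicz_iff_memOrliczHeart {h : En n → ℝ} :
    MemOrlicz φ h ↔ MemOrliczHeart (normWeighted volume) φ h := by
  refine and_congr_right fun _ => forall₂_congr fun δ hδ => ?_
  simp only [orliczModular, lintegral_normWeighted, abs_mul, abs_of_pos hδ]

theorem orliczNorm_eq_orliczNormOf (φ : ℝ → ℝ) (h : En n → ℝ) :
    orliczNorm φ h = orliczNormOf (normWeighted volume) φ h := by
  simp only [orliczNorm, orliczNormOf, orliczModular, lintegral_normWeighted]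

theorem MemOrlicz.integrable_smul_self (hφ : IsYoung φ) (hξ : Measurable ξ) {δ C : ℝ}
    (hδ : 0 < δ) (hdom : ∀ β, |ξ β| ≤ C * φ (δ * |β|)) {h : En n → ℝ} (hh : MemOrlicz φ h) :
    Integrable fun x => ξ (h x) • x := by
  refine ⟨((hξ.comp hh.1).smul measurable_id).aestronglyMeasurable, ?_⟩
  rw [HasFiniteIntegral, lintegral_enorm_smul_self]
  exact ((memOrlicz_iff_memOrliczHeart.1 hh).integrable_comp hφ hξ hδ hdom).2

theorem isOrliczValuation_integral_smul_self
    (hint : ∀ h : En n → ℝ, MemOrlicz φ h → Integrable fun x => ξ (h x) • x) :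
    IsOrliczValuation φ fun h : En n → ℝ => ∫ x, ξ (h x) • x :=
  fun h₁ h₂ hh₁ hh₂ => integral_comp_max_add_integral_comp_min (F := fun t x => ξ t • x)
    (measurableSet_le hh₁.1 hh₂.1) (hint h₁ hh₁) (hint h₂ hh₂)

theorem isOrliczSLCovariant_integral_smul_self (φ ξ : ℝ → ℝ) :
    IsOrliczSLCovariant φ fun h : En n → ℝ => ∫ x, ξ (h x) • x := by
  intro h _ ϑ hϑ
  have hdet : LinearMap.det (Matrix.toEuclideanLin ϑ) = 1 :=
    (LinearMap.det_toLpLin 2 ϑ).trans hϑ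
  let L : En n ≃L[ℝ] En n :=
    ((Matrix.toEuclideanLin ϑ).equivOfDetNeZero (by simp [hdet])).toContinuousLinearEquiv
  have hL_symm (x : En n) : L.symm x = matVec ϑ⁻¹ x := by
    refine L.injective ?_
    rw [L.apply_symm_apply]
    change x = matVec ϑ (matVec ϑ⁻¹ x)
    ext i
    simp [matVec, Matrix.toLpLin_apply, Matrix.mulVec_mulVec,
      Matrix.mul_nonsing_inv ϑ (hϑ ▸ isUnit_one)]
  simpa only [hL_symm] using! integral_comp_symm_smul_self volume L hdet fun x => ξ (h x)

theorem orliczContinuous_integral_smul_self (hφ : IsYoung φ) (hξ : Continuous ξ) {δ C : ℝ}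
    (hδ : 0 < δ) (hdom : ∀ β, |ξ β| ≤ C * φ (δ * |β|)) :
    OrliczContinuous φ fun h : En n → ℝ => ∫ x, ξ (h x) • x := by
  intro hk h hhk hh hlim
  have hint {f : En n → ℝ} (hf : MemOrlicz φ f) := hf.integrable_smul_self hφ hξ.measurable hδ hdom
  simp only [orliczNorm_eq_orliczNormOf] at hlim
  simp only [memOrlicz_iff_memOrliczHeart] at hhk
  have hheart := memOrlicz_iff_memOrliczHeart.1 hh
  refine tendsto_integral_of_L1 _ (hint hh).1
    (Eventually.of_forall fun k => hint (memOrlicz_iff_memOrliczHeart.2 (hhk k))) ?_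
  simp only [← sub_smul, lintegral_enorm_smul_self]
  exact tendsto_lintegral_enorm_comp_sub_comp hφ hξ hδ hdom (fun k => (hhk k).1) hheart
    fun c hc => tendsto_orliczModular_const_mul_of_tendsto_orliczNormOf hφ
      (fun k => (hhk k).sub hφ hheart) hlim hc

end EuclideanMoment

theorem statement6_general (n : ℕ) {φ : ℝ → ℝ} (hφ : IsYoung φ) {ξ : ℝ → ℝ} (hξ : Continuous ξ)
    {δ C : ℝ} (hδ : 0 < δ) (hdom : ∀ β, |ξ β| ≤ C * φ (δ * |β|)) :
    (∀ h : En n → ℝ, MemOrlicz φ h → Integrable fun x => ξ (h x) • x) ∧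
    IsOrliczValuation φ (fun h : En n → ℝ => ∫ x, ξ (h x) • x) ∧
    IsOrliczSLCovariant φ (fun h : En n → ℝ => ∫ x, ξ (h x) • x) ∧
    OrliczContinuous φ (fun h : En n → ℝ => ∫ x, ξ (h x) • x) := by
  have hint (h : En n → ℝ) (hh : MemOrlicz φ h) : Integrable fun x => ξ (h x) • x :=
    hh.integrable_smul_self hφ hξ.measurable hδ hdom
  exact ⟨hint, isOrliczValuation_integral_smul_self hint,
    isOrliczSLCovariant_integral_smul_self φ ξ,
    orliczContinuous_integral_smul_self hφ hξ hδ hdom⟩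

/-- Let `n ≥ 2`, `φ` a Young function, `ξ : ℝ → ℝ` continuous with
`ξ(0) = 0`, and suppose that for every `δ > 0` there is `λ_δ ≥ 0` with
`|ξ(β)| ≤ λ_δ φ(δ|β|)` for all `β`. Then for every `h ∈ L^φ(ℝⁿ, |x|dx)` the function
`x ↦ ξ(h(x)) x` is integrable, and `Ψ(h) = m(ξ∘h) = ∫ ξ(h(x)) x dx` defines a continuous,
`SL(n)` covariant valuation on `L^φ(ℝⁿ, |x|dx)`. -/
theorem statement6 (n : ℕ) (hn : 2 ≤ n) (φ : ℝ → ℝ) (hφ : IsYoung φ)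
    (ξ : ℝ → ℝ) (hξc : Continuous ξ) (hξ0 : ξ 0 = 0)
    (hdom : ∀ δ : ℝ, 0 < δ → ∃ lam : ℝ, 0 ≤ lam ∧ ∀ β : ℝ, |ξ β| ≤ lam * φ (δ * |β|)) :
    (∀ h : En n → ℝ, MemOrlicz φ h → Integrable (fun x : En n => ξ (h x) • x)) ∧
    IsOrliczValuation φ (fun h : En n → ℝ => ∫ x : En n, ξ (h x) • x) ∧
    IsOrliczSLCovariant φ (fun h : En n → ℝ => ∫ x : En n, ξ (h x) • x) ∧
    OrliczContinuous φ (fun h : En n → ℝ => ∫ x : En n, ξ (h x) • x) := by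
  obtain ⟨C, -, hC⟩ := hdom 1 one_pos
  exact statement6_general n hφ hξc one_pos hC

end
end

section
/- Let n ≥ 2 and let φ be a Young function. If Ψ : L^φ(ℝⁿ, |x|dx) → ℝⁿ is a valuation with Ψ(0) = 0, then for every l ∈ ℕ, all α₁, …, α_l ∈ ℝ, and all pairwise disjoint measurable sets M₁, …, M_l ⊆ ℝⁿ with ∫_{Mᵢ} |x| dx < ∞ for each i, one has Ψ(Σᵢ αᵢ χ_{Mᵢ}) = Σᵢ Ψ(αᵢ χ_{Mᵢ}). -/
open MeasureTheory Filter Set Topology TopologicalSpace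
open scoped ENNReal

noncomputable section

/-!
For any function `h`, applying the valuation identity to the pair `h, 0` splits `Ψ h` as
`Ψ (h ⊔ 0) + Ψ (h ⊓ 0)`. When `f` and `g` have disjoint supports, the supremum of `f ⊔ 0` and
`g ⊔ 0` is `(f + g) ⊔ 0` and their infimum is `0`, so a second use of the identity makes `Ψ`
additive on the nonnegative parts, and dually on the nonpositive parts. The splitting is needed
because `f ⊔ g` need not be `f + g` when `f` or `g` takes negative values.
-/

/-- A valuation on a sublattice `L` of a lattice: a map which is modular on the elements of `L`.
It is a total map on `E`, whose values outside `L` are irrelevant. -/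
def IsValuationOn {E A : Type*} [Lattice E] [Add A] (L : Sublattice E) (Ψ : E → A) : Prop :=
  ∀ ⦃f⦄, f ∈ L → ∀ ⦃g⦄, g ∈ L → Ψ (f ⊔ g) + Ψ (f ⊓ g) = Ψ f + Ψ g

section DisjointSupport

variable {X R : Type*}

theorem disjoint_support_iff_forall_eq_zero_or [Zero R] {f g : X → R} :
    Disjoint f.support g.support ↔ ∀ x, f x = 0 ∨ g x = 0 := by
  simp only [Set.disjoint_left, Function.mem_support, not_not, or_iff_not_imp_left]

theorem disjoint_support_sum {ι : Type*} [AddCommMonoid R] {f : X → R} {g : ι → X → R}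
    {s : Finset ι} (h : ∀ i ∈ s, Disjoint f.support (g i).support) :
    Disjoint f.support (∑ i ∈ s, g i).support := by
  simp only [disjoint_support_iff_forall_eq_zero_or, Finset.sum_apply] at h ⊢
  exact fun x => or_iff_not_imp_left.2 fun hx =>
    Finset.sum_eq_zero fun i hi => (h i hi x).resolve_left hx

theorem sum_mem_of_pairwiseDisjoint_support {ι : Type*} [AddCommMonoid R] {L : Set (X → R)}
    (zero_mem : 0 ∈ L)
    (add_mem : ∀ f ∈ L, ∀ g ∈ L, Disjoint f.support g.support → f + g ∈ L)
    {f : ι → X → R} {s : Finset ι} (hf : ∀ i ∈ s, f i ∈ L)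
    (hdisj : (s : Set ι).PairwiseDisjoint fun i => (f i).support) :
    ∑ i ∈ s, f i ∈ L := by
  induction s using Finset.cons_induction with
  | empty => exact zero_mem
  | cons a s ha ih =>
    rw [Finset.forall_mem_cons] at hf
    rw [Finset.coe_cons, Set.pairwiseDisjoint_insert_of_notMem (mod_cast ha)] at hdisj
    rw [Finset.sum_cons]
    exact add_mem _ hf.1 _ (ih hf.2 hdisj.1) (disjoint_support_sum hdisj.2)

section Lattice

variable [Lattice R] {f g : X → R}

theorem sup_zero_sup_sup_zero_of_disjoint_support [AddZeroClass R]
    (h : Disjoint f.support g.support) : (f ⊔ 0) ⊔ (g ⊔ 0) = (f + g) ⊔ 0 := by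
  funext x
  rcases disjoint_support_iff_forall_eq_zero_or.1 h x with hx | hx <;> simp [hx]

theorem sup_zero_inf_sup_zero_of_disjoint_support [Zero R]
    (h : Disjoint f.support g.support) : (f ⊔ 0) ⊓ (g ⊔ 0) = 0 := by
  funext x
  rcases disjoint_support_iff_forall_eq_zero_or.1 h x with hx | hx <;> simp [hx]

theorem inf_zero_sup_inf_zero_of_disjoint_support [Zero R]
    (h : Disjoint f.support g.support) : (f ⊓ 0) ⊔ (g ⊓ 0) = 0 := by
  funext x
  rcases disjoint_support_iff_forall_eq_zero_or.1 h x with hx | hx <;> simp [hx]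

theorem inf_zero_inf_inf_zero_of_disjoint_support [AddZeroClass R]
    (h : Disjoint f.support g.support) : (f ⊓ 0) ⊓ (g ⊓ 0) = (f + g) ⊓ 0 := by
  funext x
  rcases disjoint_support_iff_forall_eq_zero_or.1 h x with hx | hx <;> simp [hx]

end Lattice

end DisjointSupport

namespace IsValuationOn

theorem map_sup_zero_add_map_inf_zero {E A : Type*} [Lattice E] [Zero E] [AddZeroClass A]
    {L : Sublattice E} {Ψ : E → A} (hΨ : IsValuationOn L Ψ) (zero_mem : 0 ∈ L) (map_zero : Ψ 0 = 0)
    {f : E} (hf : f ∈ L) : Ψ (f ⊔ 0) + Ψ (f ⊓ 0) = Ψ f := by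
  rw [hΨ hf zero_mem, map_zero, add_zero]

variable {X R A : Type*} [Lattice R] [AddCommMonoid A]

theorem map_add_of_disjoint_support [AddZeroClass R] {L : Sublattice (X → R)} {Ψ : (X → R) → A}
    (hΨ : IsValuationOn L Ψ) (zero_mem : 0 ∈ L) (map_zero : Ψ 0 = 0) {f g : X → R}
    (hf : f ∈ L) (hg : g ∈ L) (hfg : f + g ∈ L) (hdisj : Disjoint f.support g.support) :
    Ψ (f + g) = Ψ f + Ψ g := by
  have map_sup_zero : Ψ ((f + g) ⊔ 0) = Ψ (f ⊔ 0) + Ψ (g ⊔ 0) := by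
    rw [← hΨ (L.sup_mem hf zero_mem) (L.sup_mem hg zero_mem),
      sup_zero_sup_sup_zero_of_disjoint_support hdisj,
      sup_zero_inf_sup_zero_of_disjoint_support hdisj, map_zero, add_zero]
  have map_inf_zero : Ψ ((f + g) ⊓ 0) = Ψ (f ⊓ 0) + Ψ (g ⊓ 0) := by
    rw [← hΨ (L.inf_mem hf zero_mem) (L.inf_mem hg zero_mem),
      inf_zero_sup_inf_zero_of_disjoint_support hdisj,
      inf_zero_inf_inf_zero_of_disjoint_support hdisj, map_zero, zero_add]
  calc Ψ (f + g)
      = Ψ ((f + g) ⊔ 0) + Ψ ((f + g) ⊓ 0) :=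
        (hΨ.map_sup_zero_add_map_inf_zero zero_mem map_zero hfg).symm
    _ = (Ψ (f ⊔ 0) + Ψ (f ⊓ 0)) + (Ψ (g ⊔ 0) + Ψ (g ⊓ 0)) := by
        rw [map_sup_zero, map_inf_zero, add_add_add_comm]
    _ = Ψ f + Ψ g := by
        rw [hΨ.map_sup_zero_add_map_inf_zero zero_mem map_zero hf,
          hΨ.map_sup_zero_add_map_inf_zero zero_mem map_zero hg]

theorem map_sum_of_pairwiseDisjoint_support [AddCommMonoid R] {L : Sublattice (X → R)}
    {Ψ : (X → R) → A} (hΨ : IsValuationOn L Ψ) (zero_mem : 0 ∈ L) (map_zero : Ψ 0 = 0)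
    (add_mem : ∀ f ∈ L, ∀ g ∈ L, Disjoint f.support g.support → f + g ∈ L)
    {ι : Type*} {f : ι → X → R} {s : Finset ι} (hf : ∀ i ∈ s, f i ∈ L)
    (hdisj : (s : Set ι).PairwiseDisjoint fun i => (f i).support) :
    Ψ (∑ i ∈ s, f i) = ∑ i ∈ s, Ψ (f i) := by
  induction s using Finset.cons_induction with
  | empty => exact map_zero
  | cons a s ha ih =>
    rw [Finset.forall_mem_cons] at hf
    rw [Finset.coe_cons, Set.pairwiseDisjoint_insert_of_notMem (mod_cast ha)] at hdisj
    have sum_mem : ∑ i ∈ s, f i ∈ L :=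
      sum_mem_of_pairwiseDisjoint_support zero_mem add_mem hf.2 hdisj.1
    have disjoint_sum : Disjoint (f a).support (∑ i ∈ s, f i).support :=
      disjoint_support_sum hdisj.2
    rw [Finset.sum_cons, Finset.sum_cons, ← ih hf.2 hdisj.1]
    exact hΨ.map_add_of_disjoint_support zero_mem map_zero hf.1 sum_mem
      (add_mem _ hf.1 _ sum_mem disjoint_sum) disjoint_sum

end IsValuationOn

theorem IsYoung.apply_zero {φ : ℝ → ℝ} (hφ : IsYoung φ) : φ 0 = 0 := by
  obtain ⟨ψ, -, -, -, -, -, -, hψ⟩ := hφ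
  rw [hψ 0 le_rfl, intervalIntegral.integral_same]

section Orlicz

variable {n : ℕ} {φ : ℝ → ℝ} {f g : En n → ℝ}

namespace MemOrlicz

theorem of_forall_eq_or_eq {k : En n → ℝ} (hf : MemOrlicz φ f) (hg : MemOrlicz φ g)
    (hk : Measurable k) (h : ∀ x, k x = f x ∨ k x = g x) : MemOrlicz φ k := by
  refine ⟨hk, fun δ hδ => ?_⟩
  have hA : MeasurableSet {x | k x = f x} := measurableSet_eq_fun hk hf.1
  -- Splitting the domain, rather than bounding by a sum of integrals, requires no
  -- measurability of `φ`.
  rw [← lintegral_add_compl _ hA, ENNReal.add_lt_top]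
  constructor
  · rw [setLIntegral_congr_fun (g := fun x => ENNReal.ofReal (φ (δ * |f x|)) * ENNReal.ofReal ‖x‖)
      hA fun x (hx : k x = f x) => by simp only [hx]]
    exact (setLIntegral_le_lintegral _ _).trans_lt (hf.2 δ hδ)
  · rw [setLIntegral_congr_fun (g := fun x => ENNReal.ofReal (φ (δ * |g x|)) * ENNReal.ofReal ‖x‖)
      hA.compl fun x hx => by simp only [(h x).resolve_left hx]]
    exact (setLIntegral_le_lintegral _ _).trans_lt (hg.2 δ hδ)

theorem sup (hf : MemOrlicz φ f) (hg : MemOrlicz φ g) : MemOrlicz φ (f ⊔ g) :=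
  hf.of_forall_eq_or_eq hg (hf.1.sup hg.1) fun x => max_choice (f x) (g x)

theorem inf (hf : MemOrlicz φ f) (hg : MemOrlicz φ g) : MemOrlicz φ (f ⊓ g) :=
  hf.of_forall_eq_or_eq hg (hf.1.inf hg.1) fun x => min_choice (f x) (g x)

theorem add_of_disjoint_support (hf : MemOrlicz φ f) (hg : MemOrlicz φ g)
    (h : Disjoint f.support g.support) : MemOrlicz φ (f + g) :=
  hf.of_forall_eq_or_eq hg (hf.1.add hg.1) fun x => by
    rcases disjoint_support_iff_forall_eq_zero_or.1 h x with hx | hx <;> simp [hx]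

theorem zero (hφ : φ 0 = 0) : MemOrlicz φ (0 : En n → ℝ) :=
  ⟨measurable_zero, fun δ _ => by simp [hφ]⟩

theorem indicator_const (hφ : φ 0 = 0) {M : Set (En n)} (hM : MeasurableSet M)
    (hfin : mun M < ⊤) (a : ℝ) : MemOrlicz φ (M.indicator fun _ => a) := by
  refine ⟨measurable_const.indicator hM, fun δ _ => ?_⟩
  have integrand_eq : (fun x => ENNReal.ofReal (φ (δ * |M.indicator (fun _ => a) x|)) *
      ENNReal.ofReal ‖x‖) =
      M.indicator fun x => ENNReal.ofReal (φ (δ * |a|)) * ENNReal.ofReal ‖x‖ := by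
    funext x
    by_cases hx : x ∈ M <;> simp [hx, hφ]
  rw [integrand_eq, lintegral_indicator hM, lintegral_const_mul' _ _ ENNReal.ofReal_ne_top]
  exact ENNReal.mul_lt_top ENNReal.ofReal_lt_top hfin

end MemOrlicz

/-- The Orlicz space `L^φ(ℝⁿ, |x|dx)` as a sublattice of the functions `ℝⁿ → ℝ`, not
identifying functions that agree almost everywhere. -/
def orliczSublattice (n : ℕ) (φ : ℝ → ℝ) : Sublattice (En n → ℝ) where
  carrier := {h | MemOrlicz φ h}
  supClosed' _ hf _ hg := MemOrlicz.sup hf hg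
  infClosed' _ hf _ hg := MemOrlicz.inf hf hg

theorem IsOrliczValuation.isValuationOn {Ψ : (En n → ℝ) → En n} (hΨ : IsOrliczValuation φ Ψ) :
    IsValuationOn (orliczSublattice n φ) Ψ :=
  fun f hf g hg => hΨ f g hf hg

theorem statement9_general (hφ : φ 0 = 0) {Ψ : (En n → ℝ) → En n} (hΨ : IsOrliczValuation φ Ψ)
    (map_zero : Ψ 0 = 0) {ι : Type*} {f : ι → En n → ℝ} {s : Finset ι}
    (hf : ∀ i ∈ s, MemOrlicz φ (f i))
    (hdisj : (s : Set ι).PairwiseDisjoint fun i => (f i).support) :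
    Ψ (∑ i ∈ s, f i) = ∑ i ∈ s, Ψ (f i) :=
  hΨ.isValuationOn.map_sum_of_pairwiseDisjoint_support (MemOrlicz.zero hφ) map_zero
    (fun _ hf _ hg => MemOrlicz.add_of_disjoint_support hf hg) hf hdisj

end Orlicz

/-- For `n ≥ 2` and a Young function `φ`, if `Ψ : L^φ(ℝⁿ, |x|dx) → ℝⁿ`
is a valuation with `Ψ(0) = 0`, then for all `α₁, …, α_l ∈ ℝ` and pairwise disjoint
measurable sets `M₁, …, M_l` with `μₙ(Mᵢ) < ∞`, one has
`Ψ(Σᵢ αᵢ χ_{Mᵢ}) = Σᵢ Ψ(αᵢ χ_{Mᵢ})`. -/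
theorem statement9 (n : ℕ) (hn : 2 ≤ n) (φ : ℝ → ℝ) (hφ : IsYoung φ)
    (Ψ : (En n → ℝ) → En n) (hval : IsOrliczValuation φ Ψ) (h0 : Ψ (fun _ => 0) = 0)
    (l : ℕ) (α : Fin l → ℝ) (M : Fin l → Set (En n))
    (hmeas : ∀ i, MeasurableSet (M i))
    (hdisj : ∀ i j, i ≠ j → Disjoint (M i) (M j))
    (hfin : ∀ i, mun (M i) < ⊤) :
    Ψ (fun x => ∑ i, (M i).indicator (fun _ => α i) x) =
      ∑ i, Ψ ((M i).indicator fun _ => α i) := by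
  simpa only [Finset.sum_fn] using
    statement9_general hφ.apply_zero hval h0
      (fun i _ => MemOrlicz.indicator_const hφ.apply_zero (hmeas i) (hfin i) (α i))
      fun i _ j _ hij => (hdisj i j hij).mono support_indicator_subset support_indicator_subset

end
end
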